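/- Fix n ≥ 1 and a real number t with 0 ≤ t < 1. An ℝ-algebra homomorphism θ: Λ_n → ℝ satisfies θ(P_λ(a_1,…,a_n;t)) ≥ 0 for every partition λ with at most n nonzero parts if and only if there exist nonnegative reals α_1, …, α_n such that θ is the evaluation homomorphism θ(f) = f(α_1, …, α_n) for all f ∈ Λ_n. -/

import Mathlib

/-!
Evaluation at a point with distinct positive coordinates is treated by branching. By homogeneity
the first coordinate may be taken to be `1`, and `v_λ P_λ(1, x; t)` is then the symmetrization of a
rational function of `x` (`hlR_cons_one`). Symmetrizing in adjacent variables cancels the poles of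
this function at `1`, and leaves a combination of monomials `w^μ`, with `μ` a partition and
coefficients that are nonnegative for `0 ≤ t ≤ 1` (`hlSym_hlW`, `hlUE_mem`). Hence
`v_λ P_λ(1, x; t)` is a nonnegative combination of the `v_μ P_μ(x; t)`, and induction gives
nonnegativity at distinct positive points (`hlR_nonneg`); by continuity it holds on the closed
orthant (`eval_hlPoly_nonneg`).

Conversely, a homomorphism `θ` is evaluation at a complex point `α`, whose coordinates are the
roots of the real polynomial `∑_j (−1)^j θ(e_j) X^{n−j}` (`exists_complex_point`). Fix a partition
`μ` with `n − 1` parts and consider the sequence `a_k = v P_{(k, μ)}(α)`. Expanding by the variable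
carrying the exponent `k` and annihilating all variables but `α_i` with the difference operator
`∏_{j ≠ i} (T − α_j)`, where `T` is the shift, gives
`α_i^k ∏_{j ≠ i} (α_i − t α_j) · v_μ P_μ((α_j)_{j ≠ i})` (`shiftSub_aeval`); this identity has
no denominators, so coinciding `α_j` need no special treatment. Consequently `∑_k a_k z^k` is
rational with denominator `∏_j (1 − α_j z)` and a numerator known at `z = 1/α_i`
(`generating_rational`).

Let `r > 0` be the largest modulus of the `α_j`. For `μ = 0` the coefficients `a_k` are nonnegative
and the numerator does not vanish at `1/α_i` when `|α_i| = r`, because `t < 1`; as in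
Pringsheim's theorem, `1/r` must be a zero of the denominator, i.e. some `α_i` equals `r`
(`exists_eq_norm`). For arbitrary `μ` the product of the series and its denominator is nonnegative
on `(0, 1/r)`, so the numerator is nonnegative at `1/r`; dividing by positive factors shows that
`P_μ` is nonnegative at the point obtained by deleting `α_i` (`nonneg_succAbove`). Induction on the
number of variables finishes the proof.
-/


open MvPolynomial

/-- The Vandermonde product `∏_{1 ≤ i < j ≤ n} (a_i − a_j)`. -/
noncomputable def vand (n : ℕ) : MvPolynomial (Fin n) ℝ :=
  ∏ p ∈ Finset.univ.filter (fun p : Fin n × Fin n => p.1 < p.2), (X p.1 - X p.2)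

/-- The `t`-deformed Vandermonde product `∏_{1 ≤ i < j ≤ n} (a_i − t a_j)`. -/
noncomputable def tvand (n : ℕ) (t : ℝ) : MvPolynomial (Fin n) ℝ :=
  ∏ p ∈ Finset.univ.filter (fun p : Fin n × Fin n => p.1 < p.2), (X p.1 - C t * X p.2)

/-- `Σ_{w ∈ S_n} sgn(w) · w(a^λ ∏_{i<j}(a_i − t a_j))`. -/
noncomputable def hlNumerator (n : ℕ) (t : ℝ) (lam : Fin n → ℕ) : MvPolynomial (Fin n) ℝ :=
  ∑ w : Equiv.Perm (Fin n),
    ((Equiv.Perm.sign w : ℤ) : ℝ) • rename ⇑w ((∏ i, X i ^ lam i) * tvand n t)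

/-- `m_k(λ)`: the number of parts of `λ` equal to `k`. -/
def mkcount (n : ℕ) (lam : Fin n → ℕ) (k : ℕ) : ℕ :=
  (Finset.univ.filter (fun i => lam i = k)).card

/-- `v_λ(t) = ∏_{k ≥ 0} ∏_{i=1}^{m_k(λ)} (1 − t^i)/(1 − t)`. -/
noncomputable def vlam (n : ℕ) (t : ℝ) (lam : Fin n → ℕ) : ℝ :=
  ∏ k ∈ Finset.image lam Finset.univ,
    ∏ i ∈ Finset.range (mkcount n lam k), (1 - t ^ (i + 1)) / (1 - t)

/-- `P` is the Hall–Littlewood polynomial `P_λ(a_1,…,a_n;t)`, via the denominator-cleared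
characterization `v_λ(t)·P·∏_{i<j}(a_i−a_j) = Σ_w sgn(w) w(a^λ ∏_{i<j}(a_i − t a_j))`. -/
def IsHL (n : ℕ) (t : ℝ) (lam : Fin n → ℕ) (P : MvPolynomial (Fin n) ℝ) : Prop :=
  C (vlam n t lam) * P * vand n = hlNumerator n t lam

/-- The one-row partition `(k, 0, …, 0)` with `n` parts. -/
def oneRow (n k : ℕ) : Fin n → ℕ := fun i => if (i : ℕ) = 0 then k else 0

/-- `g` equals `g_k := (1 − t)·P_{(k)}(a_1,…,a_n;t)` (denominator-cleared form). -/
def IsG (n : ℕ) (t : ℝ) (k : ℕ) (g : MvPolynomial (Fin n) ℝ) : Prop :=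
  C (vlam n t (oneRow n k)) * g * vand n = C (1 - t) * hlNumerator n t (oneRow n k)

noncomputable section

/-! ### Symmetrization -/

/-- The factor `(a − t b)/(a − b)`. -/
def hlU (t a b : ℝ) : ℝ := (a - t * b) / (a - b)

/-- The weight `∏_{i<j} (w_i − t w_j)/(w_i − w_j)`. -/
def hlDelta (t : ℝ) (n : ℕ) (w : Fin n → ℝ) : ℝ :=
  ∏ p ∈ Finset.univ.filter (fun p : Fin n × Fin n => p.1 < p.2), hlU t (w p.1) (w p.2)

/-- The Hall–Littlewood symmetrizer `f ↦ ∑_σ σ(f · ∏_{i<j} (x_i − t x_j)/(x_i − x_j))`. -/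
def hlSym (t : ℝ) (n : ℕ) (f : (Fin n → ℝ) → ℝ) (x : Fin n → ℝ) : ℝ :=
  ∑ σ : Equiv.Perm (Fin n), f (x ∘ σ) * hlDelta t n (x ∘ σ)

/-- The monomial function `w ↦ w^μ`. -/
def monoFun {n : ℕ} (μ : Fin n → ℕ) (w : Fin n → ℝ) : ℝ := ∏ i, w i ^ μ i

/-- The values of the unnormalised Hall–Littlewood polynomial `v_λ(t) P_λ(x;t)`. -/
def hlR (t : ℝ) (n : ℕ) (lam : Fin n → ℕ) (x : Fin n → ℝ) : ℝ :=
  hlSym t n (monoFun lam) x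

lemma prod_lt_succ {M : Type*} [CommMonoid M] (n : ℕ) (f : Fin (n + 1) → Fin (n + 1) → M) :
    ∏ p ∈ Finset.univ.filter (fun p : Fin (n + 1) × Fin (n + 1) => p.1 < p.2), f p.1 p.2 =
      (∏ j : Fin n, f 0 j.succ) *
        ∏ p ∈ Finset.univ.filter (fun p : Fin n × Fin n => p.1 < p.2), f p.1.succ p.2.succ := by
  simp [Finset.prod_filter, Fintype.prod_prod_type, Fin.prod_univ_succ]

lemma hlDelta_succ (t : ℝ) (n : ℕ) (w : Fin (n + 1) → ℝ) :
    hlDelta t (n + 1) w = (∏ j : Fin n, hlU t (w 0) (w j.succ)) * hlDelta t n (Fin.tail w) :=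
  prod_lt_succ n fun i j => hlU t (w i) (w j)

/-- The permutation with `0 ↦ i` and `j + 1 ↦ i.succAbove (τ j)`. -/
def consPerm {n : ℕ} (i : Fin (n + 1)) (τ : Equiv.Perm (Fin n)) : Equiv.Perm (Fin (n + 1)) :=
  Equiv.ofBijective (Fin.cons i fun j => i.succAbove (τ j)) <| by
    rw [← Finite.injective_iff_bijective, Fin.cons_injective_iff]
    refine ⟨?_, Fin.succAbove_right_injective.comp τ.injective⟩
    rintro ⟨j, hj⟩
    exact Fin.succAbove_ne _ _ hj

@[simp] lemma consPerm_zero {n : ℕ} (i : Fin (n + 1)) (τ : Equiv.Perm (Fin n)) :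
    consPerm i τ 0 = i := rfl

@[simp] lemma consPerm_succ {n : ℕ} (i : Fin (n + 1)) (τ : Equiv.Perm (Fin n)) (j : Fin n) :
    consPerm i τ j.succ = i.succAbove (τ j) := rfl

lemma consPerm_bijective (n : ℕ) :
    Function.Bijective fun p : Fin (n + 1) × Equiv.Perm (Fin n) => consPerm p.1 p.2 := by
  rw [Fintype.bijective_iff_injective_and_card]
  constructor
  · rintro ⟨i, τ⟩ ⟨j, ρ⟩ h
    have h0 : i = j := by simpa using congrArg (fun σ => σ 0) h
    subst h0
    have : τ = ρ := by
      ext1 k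
      have := congrArg (fun σ => σ k.succ) h
      simpa using this
    rw [this]
  · simp [Fintype.card_perm, Nat.factorial_succ]

lemma sum_perm_succ {M : Type*} [AddCommMonoid M] {n : ℕ} (F : Equiv.Perm (Fin (n + 1)) → M) :
    ∑ σ, F σ = ∑ i, ∑ τ, F (consPerm i τ) := by
  rw [← Fintype.sum_prod_type', ← (consPerm_bijective n).sum_comp]

/-- Expansion of the symmetrizer according to the variable put in position `0`. -/
lemma hlSym_succ (t : ℝ) (n : ℕ) (f : (Fin (n + 1) → ℝ) → ℝ) (x : Fin (n + 1) → ℝ) :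
    hlSym t (n + 1) f x = ∑ i, (∏ j, hlU t (x i) (x (i.succAbove j))) *
      hlSym t n (fun w => f (Fin.cons (x i) w)) (x ∘ i.succAbove) := by
  unfold hlSym
  rw [sum_perm_succ]
  refine Finset.sum_congr rfl fun i _ => ?_
  rw [Finset.mul_sum]
  refine Finset.sum_congr rfl fun τ _ => ?_
  have h1 : x ∘ consPerm i τ = Fin.cons (x i) ((x ∘ i.succAbove) ∘ τ) := by
    ext k
    refine Fin.cases ?_ (fun j => ?_) k <;> simp
  rw [h1, hlDelta_succ]
  have h2 : ∏ j : Fin n, hlU t (x i) (x (i.succAbove j)) =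
      ∏ j : Fin n, hlU t (x i) (x (i.succAbove (τ j))) :=
    (Equiv.prod_comp τ fun j => hlU t (x i) (x (i.succAbove j))).symm
  simp only [Fin.cons_zero, Fin.cons_succ, Fin.tail_cons, h2, Function.comp_apply]
  ring

/-- Expansion of the symmetrizer according to the position taken by the first variable. -/
lemma hlSym_cons (t : ℝ) (n : ℕ) (f : (Fin (n + 1) → ℝ) → ℝ) (y : ℝ) (x : Fin n → ℝ) :
    hlSym t (n + 1) f (Fin.cons y x) = ∑ τ : Equiv.Perm (Fin n), ∑ i : Fin (n + 1),
      f (i.insertNth (α := fun _ => ℝ) y (x ∘ τ)) *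
        hlDelta t (n + 1) (i.insertNth (α := fun _ => ℝ) y (x ∘ τ)) := by
  unfold hlSym
  rw [← Equiv.sum_comp (Equiv.inv (Equiv.Perm (Fin (n + 1)))), sum_perm_succ, Finset.sum_comm,
    ← Equiv.sum_comp (Equiv.inv (Equiv.Perm (Fin n)))]
  refine Finset.sum_congr rfl fun τ _ => Finset.sum_congr rfl fun i _ => ?_
  have h : (Fin.cons y x : Fin (n + 1) → ℝ) ∘ ((consPerm i τ⁻¹)⁻¹ : Equiv.Perm (Fin (n + 1))) =
      i.insertNth (α := fun _ => ℝ) y (x ∘ τ) := by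
    rw [Fin.eq_insertNth_iff]
    constructor
    · have : (consPerm i τ⁻¹)⁻¹ i = 0 := by rw [Equiv.Perm.inv_eq_iff_eq]; simp
      rw [Function.comp_apply, this, Fin.cons_zero]
    · ext k
      have : (consPerm i τ⁻¹)⁻¹ (i.succAbove k) = (τ k).succ := by
        rw [Equiv.Perm.inv_eq_iff_eq]; simp
      simp only [Fin.removeNth, Function.comp_apply, this, Fin.cons_succ]
  simp only [Equiv.inv_apply, h]

lemma hlR_succ (t : ℝ) (n : ℕ) (k : ℕ) (μ : Fin n → ℕ) (x : Fin (n + 1) → ℝ) :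
    hlR t (n + 1) (Fin.cons k μ) x = ∑ i, x i ^ k *
      ((∏ j, hlU t (x i) (x (i.succAbove j))) * hlR t n μ (x ∘ i.succAbove)) := by
  unfold hlR
  rw [hlSym_succ]
  refine Finset.sum_congr rfl fun i _ => ?_
  simp only [hlSym, monoFun, Fin.prod_univ_succ, Fin.cons_zero, Fin.cons_succ, Finset.mul_sum]
  refine Finset.sum_congr rfl fun τ _ => ?_
  ring

/-- Two functions have the same symmetrization once they agree on average over each pair
`σ, σπ`. -/
lemma hlSym_swap (t : ℝ) (n : ℕ) (f g : (Fin n → ℝ) → ℝ) (x : Fin n → ℝ) (π : Equiv.Perm (Fin n))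
    (h : ∀ σ : Equiv.Perm (Fin n),
      f (x ∘ σ) * hlDelta t n (x ∘ σ) + f (x ∘ σ ∘ π) * hlDelta t n (x ∘ σ ∘ π) =
      g (x ∘ σ) * hlDelta t n (x ∘ σ) + g (x ∘ σ ∘ π) * hlDelta t n (x ∘ σ ∘ π)) :
    hlSym t n f x = hlSym t n g x := by
  have key : ∀ f : (Fin n → ℝ) → ℝ, 2 * hlSym t n f x = ∑ σ : Equiv.Perm (Fin n),
      (f (x ∘ σ) * hlDelta t n (x ∘ σ) + f (x ∘ σ ∘ π) * hlDelta t n (x ∘ σ ∘ π)) := by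
    intro f
    rw [Finset.sum_add_distrib, two_mul]
    congr 1
    exact (Equiv.sum_comp (Equiv.mulRight π)
      fun σ : Equiv.Perm (Fin n) => f (x ∘ σ) * hlDelta t n (x ∘ σ)).symm
  have := (key f).trans ((Finset.sum_congr rfl fun σ _ => h σ).trans (key g).symm)
  linarith

/-! ### Specializing one variable to one -/

lemma hlSym_congr_fun (t : ℝ) (n : ℕ) {f g : (Fin n → ℝ) → ℝ} {x : Fin n → ℝ}
    (h : ∀ σ : Equiv.Perm (Fin n), f (x ∘ σ) = g (x ∘ σ)) : hlSym t n f x = hlSym t n g x :=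
  Finset.sum_congr rfl fun σ _ => by rw [h σ]

lemma hlSym_const_mul (t : ℝ) (n : ℕ) (c : ℝ) (f : (Fin n → ℝ) → ℝ) (x : Fin n → ℝ) :
    hlSym t n (fun w => c * f w) x = c * hlSym t n f x := by
  simp only [hlSym, Finset.mul_sum, mul_assoc]

lemma hlSym_sub (t : ℝ) (n : ℕ) (f g : (Fin n → ℝ) → ℝ) (x : Fin n → ℝ) :
    hlSym t n (fun w => f w - g w) x = hlSym t n f x - hlSym t n g x := by
  simp only [hlSym, sub_mul, Finset.sum_sub_distrib]

lemma hlSym_add (t : ℝ) (n : ℕ) (f g : (Fin n → ℝ) → ℝ) (x : Fin n → ℝ) :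
    hlSym t n (fun w => f w + g w) x = hlSym t n f x + hlSym t n g x := by
  simp only [hlSym, add_mul, Finset.sum_add_distrib]

/-- The tuple has distinct entries, all different from `1`. -/
def Adm {n : ℕ} (x : Fin n → ℝ) : Prop := Function.Injective x ∧ ∀ i, x i ≠ 1

lemma Adm.comp {n m : ℕ} {x : Fin n → ℝ} (h : Adm x) {f : Fin m → Fin n}
    (hf : Function.Injective f) : Adm (x ∘ f) :=
  ⟨h.1.comp hf, fun i => h.2 (f i)⟩

lemma hlSym_congr_cons (t : ℝ) (n : ℕ) {f g : (Fin (n + 1) → ℝ) → ℝ}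
    (h : ∀ y (x : Fin n → ℝ), Adm x →
      hlSym t n (fun w => f (Fin.cons y w)) x = hlSym t n (fun w => g (Fin.cons y w)) x)
    {x : Fin (n + 1) → ℝ} (hx : Adm x) : hlSym t (n + 1) f x = hlSym t (n + 1) g x := by
  rw [hlSym_succ, hlSym_succ]
  exact Finset.sum_congr rfl fun i _ => by
    rw [h _ _ (hx.comp Fin.succAbove_right_injective)]

/-- The sum, divided by `∏_{i<j} (w_i − t w_j)/(w_i − w_j)`, of the terms of `v_λ P_λ(1, w)` over
all the positions at which the variable `1` may be inserted among `w_1, …, w_n`. -/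
def hlW (t : ℝ) : (n : ℕ) → (Fin (n + 1) → ℕ) → (Fin n → ℝ) → ℝ
  | 0, _, _ => 1
  | n + 1, lam, w => (∏ k, hlU t 1 (w k) * w k ^ lam k.succ) +
      w 0 ^ lam 0 * hlU t (w 0) 1 * hlW t n (Fin.tail lam) (Fin.tail w)

lemma hlW_spec (t : ℝ) (n : ℕ) (lam : Fin (n + 1) → ℕ) (w : Fin n → ℝ) :
    ∑ i : Fin (n + 1), monoFun lam (i.insertNth (α := fun _ => ℝ) 1 w) *
        hlDelta t (n + 1) (i.insertNth (α := fun _ => ℝ) 1 w) = hlW t n lam w * hlDelta t n w := by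
  induction n with
  | zero =>
    simp [hlW, monoFun, hlDelta, Finset.prod_filter, Fintype.prod_prod_type]
  | succ n ih =>
    rw [Fin.sum_univ_succ]
    have hs : ∀ i : Fin (n + 1), i.succ.insertNth (α := fun _ => ℝ) 1 w =
        Fin.cons (w 0) (i.insertNth (α := fun _ => ℝ) 1 (Fin.tail w)) := by
      intro i
      symm
      rw [Fin.eq_insertNth_iff]
      refine ⟨by simp, ?_⟩
      ext k
      refine Fin.cases ?_ (fun j => ?_) k <;> simp [Fin.removeNth, Fin.tail]
    have h0 : (0 : Fin (n + 2)).insertNth (α := fun _ => ℝ) 1 w = Fin.cons 1 w := by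
      simp
    have hp : ∀ i : Fin (n + 1), ∏ j : Fin (n + 1),
        hlU t (w 0) (i.insertNth (α := fun _ => ℝ) 1 (Fin.tail w) j) =
        hlU t (w 0) 1 * ∏ j : Fin n, hlU t (w 0) (w j.succ) := by
      intro i
      rw [Fin.prod_univ_succAbove _ i]
      simp [Fin.tail]
    have hterm : ∀ i : Fin (n + 1), monoFun lam (i.succ.insertNth (α := fun _ => ℝ) 1 w) *
        hlDelta t (n + 2) (i.succ.insertNth (α := fun _ => ℝ) 1 w) =
        (w 0 ^ lam 0 * hlU t (w 0) 1 * ∏ j : Fin n, hlU t (w 0) (w j.succ)) *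
        (monoFun (Fin.tail lam) (i.insertNth (α := fun _ => ℝ) 1 (Fin.tail w)) *
        hlDelta t (n + 1) (i.insertNth (α := fun _ => ℝ) 1 (Fin.tail w))) := by
      intro i
      rw [hs, hlDelta_succ]
      simp only [monoFun, Fin.prod_univ_succ (n := n + 1), Fin.cons_zero, Fin.cons_succ,
        Fin.tail_cons, hp, Fin.tail]
      ring
    rw [Finset.sum_congr rfl fun i _ => hterm i, ← Finset.mul_sum, ih, h0, hlDelta_succ]
    rw [hlDelta_succ t n w, hlW, monoFun, Fin.prod_univ_succ (n := n + 1)]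
    simp only [Fin.cons_zero, Fin.cons_succ, Fin.tail_cons, Finset.prod_mul_distrib,
      hlDelta_succ t n w]
    ring

/-- Setting the first variable to `1` leaves the symmetrization of `hlW` in the others. -/
lemma hlR_cons_one (t : ℝ) (n : ℕ) (lam : Fin (n + 1) → ℕ) (x : Fin n → ℝ) :
    hlR t (n + 1) lam (Fin.cons 1 x) = hlSym t n (hlW t n lam) x := by
  rw [hlR, hlSym_cons, hlSym]
  exact Finset.sum_congr rfl fun τ _ => hlW_spec t n lam _

/-- The pair `(U_λ, E_λ)`, where `E_λ` is a polynomial with the same symmetrization as `hlW` and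
`U_λ = E_λ − t w_1^{λ_1} E_{(λ_2, λ_3, …)}`. The recursion visibly produces nonnegative
coefficients when `0 ≤ t ≤ 1`. -/
def hlUE (t : ℝ) : (n : ℕ) → (Fin (n + 1) → ℕ) → (Fin n → ℝ) → ℝ × ℝ
  | 0, _, _ => (1, 1)
  | n + 1, lam, w =>
    let p := hlUE t n (Fin.tail lam) (Fin.tail w)
    let U := (1 - t) * ((∑ c ∈ Finset.Ioc (lam 1) (lam 0), w 0 ^ c) * p.2) + w 0 ^ lam 1 * p.1
    (U, U + t * (w 0 ^ lam 0 * p.2))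

lemma hlC_eq (t y : ℝ) (hy : y ≠ 1) {a b : ℕ} (hab : b ≤ a) :
    y ^ a * hlU t y 1 + hlU t 1 y * y ^ b =
      (1 - t) * (∑ c ∈ Finset.Ioc b a, y ^ c) + y ^ b + t * y ^ a := by
  have h1 : y - 1 ≠ 0 := sub_ne_zero.2 hy
  have h2 : 1 - y ≠ 0 := sub_ne_zero.2 hy.symm
  have h3 : Finset.Ioc b a = Finset.Ico (b + 1) (a + 1) := by
    ext c; rw [Finset.mem_Ioc, Finset.mem_Ico]; omega
  rw [h3, geom_sum_Ico hy (by omega)]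
  have h4 : hlU t 1 y = -((1 - t * y) / (y - 1)) := by
    rw [hlU, ← neg_sub y 1, div_neg]
  rw [h4, hlU]
  field_simp
  ring

/-- The two orders of adjacent factors cancel up to a polynomial: this is the identity that removes
the poles at `1` from `hlW`. -/
lemma hl_swap_identity (t x y : ℝ) (hxy : x ≠ y) (hx : x ≠ 1) (hy : y ≠ 1) (c : ℕ) :
    (hlU t 1 x * x ^ c) * (y ^ c * hlU t y 1) * hlU t x y +
      (hlU t 1 y * y ^ c) * (x ^ c * hlU t x 1) * hlU t y x =
    t * (x ^ c * y ^ c) * hlU t x y + t * (y ^ c * x ^ c) * hlU t y x := by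
  have h1 : x - 1 ≠ 0 := sub_ne_zero.2 hx
  have h2 : y - 1 ≠ 0 := sub_ne_zero.2 hy
  have h3 : x - y ≠ 0 := sub_ne_zero.2 hxy
  have e : ∀ a b : ℝ, hlU t a b = -((a - t * b) / (b - a)) := fun a b => by
    rw [hlU, ← neg_sub b a, div_neg]
  rw [e 1 x, e 1 y, e y x]
  simp only [hlU]
  field_simp
  ring

lemma hlW_succ_succ (t : ℝ) (n : ℕ) (lam : Fin (n + 3) → ℕ) (w : Fin (n + 2) → ℝ) :
    hlW t (n + 2) lam w =
      (w 0 ^ lam 0 * hlU t (w 0) 1 + hlU t 1 (w 0) * w 0 ^ lam 1) *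
        hlW t (n + 1) (Fin.tail lam) (Fin.tail w) -
      (hlU t 1 (w 0) * w 0 ^ lam 1) * ((w 1 ^ lam 1 * hlU t (w 1) 1) *
        hlW t n (Fin.tail (Fin.tail lam)) (Fin.tail (Fin.tail w))) := by
  rw [hlW, Fin.prod_univ_succ, hlW]
  simp only [Fin.tail, Fin.succ_zero_eq_one]
  ring

lemma hlDelta_succ_succ (t : ℝ) (n : ℕ) (w : Fin (n + 2) → ℝ) :
    hlDelta t (n + 2) w = hlU t (w 0) (w 1) * ((∏ j : Fin n, hlU t (w 0) (w j.succ.succ)) *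
      (∏ j : Fin n, hlU t (w 1) (w j.succ.succ)) * hlDelta t n (Fin.tail (Fin.tail w))) := by
  rw [hlDelta_succ, hlDelta_succ, Fin.prod_univ_succ]
  simp only [Fin.tail, Fin.succ_zero_eq_one]
  ring

lemma hlUE_snd_succ (t : ℝ) (n : ℕ) (lam : Fin (n + 3) → ℕ) (hl : Antitone lam)
    (w : Fin (n + 2) → ℝ) (hw : w 0 ≠ 1) :
    (hlUE t (n + 2) lam w).2 =
      (w 0 ^ lam 0 * hlU t (w 0) 1 + hlU t 1 (w 0) * w 0 ^ lam 1) *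
        (hlUE t (n + 1) (Fin.tail lam) (Fin.tail w)).2 -
      t * (w 0 ^ lam 1 * w 1 ^ lam 1) *
        (hlUE t n (Fin.tail (Fin.tail lam)) (Fin.tail (Fin.tail w))).2 := by
  rw [hlC_eq t _ hw (hl (Fin.zero_le 1))]
  simp only [hlUE, Fin.tail, Fin.succ_zero_eq_one]
  ring

lemma antitone_tail {n : ℕ} {lam : Fin (n + 1) → ℕ} (h : Antitone lam) :
    Antitone (Fin.tail lam) :=
  fun _ _ hij => h (Fin.succ_le_succ_iff.2 hij)

lemma antitone_cons {m : ℕ} {μ : Fin m → ℕ} (hμ : Antitone μ) {k : ℕ} (hk : ∀ j, μ j ≤ k) :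
    Antitone (Fin.cons k μ : Fin (m + 1) → ℕ) := by
  intro p q hpq
  induction q using Fin.cases with
  | zero =>
    rw [Fin.le_zero_iff.1 hpq]
  | succ q =>
    induction p using Fin.cases with
    | zero => simpa using hk q
    | succ p => simpa using hμ (Fin.succ_le_succ_iff.1 hpq)

/-- Symmetrization turns the rational function `hlW` into the polynomial `E_λ`. Both satisfy
second-order recursions in the number of variables with the same leading coefficient (`hlC_eq`);
the remaining terms agree after symmetrizing in the first two variables (`hl_swap_identity`). -/
lemma hlSym_hlW (t : ℝ) (n : ℕ) :
    (∀ lam : Fin (n + 1) → ℕ, Antitone lam → ∀ x : Fin n → ℝ, Adm x →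
      hlSym t n (hlW t n lam) x = hlSym t n (fun w => (hlUE t n lam w).2) x) ∧
    (∀ lam : Fin (n + 2) → ℕ, Antitone lam → ∀ x : Fin (n + 1) → ℝ, Adm x →
      hlSym t (n + 1) (hlW t (n + 1) lam) x =
        hlSym t (n + 1) (fun w => (hlUE t (n + 1) lam w).2) x) := by
  induction n with
  | zero =>
    refine ⟨fun lam _ x _ => rfl, fun lam hl x hx => hlSym_congr_fun t 1 fun σ => ?_⟩
    have := hlC_eq t ((x ∘ σ) 0) ((hx.comp σ.injective).2 0) (hl (Fin.zero_le 1))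
    simp only [hlW, hlUE, Fin.prod_univ_succ, Fin.prod_univ_zero, Fin.succ_zero_eq_one] at this ⊢
    linarith
  | succ n ih =>
    refine ⟨ih.2, fun lam hl x hx => ?_⟩
    have hx0 : ∀ σ : Equiv.Perm (Fin (n + 2)), Adm (x ∘ σ) := fun σ => hx.comp σ.injective
    rw [show hlW t (n + 1 + 1) lam = _ from funext (hlW_succ_succ t n lam),
      hlSym_congr_fun t (n + 1 + 1) (f := fun w => (hlUE t (n + 1 + 1) lam w).2) (g := fun w =>
        (w 0 ^ lam 0 * hlU t (w 0) 1 + hlU t 1 (w 0) * w 0 ^ lam 1) *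
          (hlUE t (n + 1) (Fin.tail lam) (Fin.tail w)).2 -
        t * (w 0 ^ lam 1 * w 1 ^ lam 1) *
          (hlUE t n (Fin.tail (Fin.tail lam)) (Fin.tail (Fin.tail w))).2)
        fun σ => hlUE_snd_succ t n lam hl (x ∘ σ) ((hx0 σ).2 0),
      hlSym_sub, hlSym_sub]
    congr 1
    · refine hlSym_congr_cons t _ (fun y z hz => ?_) hx
      simp only [Fin.cons_zero, Fin.tail_cons, hlSym_const_mul]
      rw [ih.2 _ (antitone_tail hl) z hz]
    · have step : hlSym t (n + 2) (fun w => (hlU t 1 (w 0) * w 0 ^ lam 1) *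
          ((w 1 ^ lam 1 * hlU t (w 1) 1) *
            hlW t n (Fin.tail (Fin.tail lam)) (Fin.tail (Fin.tail w)))) x =
          hlSym t (n + 2) (fun w => (hlU t 1 (w 0) * w 0 ^ lam 1) *
          ((w 1 ^ lam 1 * hlU t (w 1) 1) *
            (hlUE t n (Fin.tail (Fin.tail lam)) (Fin.tail (Fin.tail w))).2)) x := by
        refine hlSym_congr_cons t _ (fun y z hz => ?_) hx
        simp only [Fin.cons_zero, Fin.cons_one, Fin.tail_cons, hlSym_const_mul]
        congr 1
        refine hlSym_congr_cons t _ (fun y' z' hz' => ?_) hz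
        simp only [Fin.cons_zero, Fin.tail_cons, hlSym_const_mul]
        rw [ih.1 _ (antitone_tail (antitone_tail hl)) z' hz']
      rw [step]
      refine hlSym_swap t _ _ _ x (Equiv.swap 0 1) fun σ => ?_
      set w := x ∘ σ with hw
      have hwa : Adm w := hx0 σ
      have hw' : x ∘ ⇑σ ∘ ⇑(Equiv.swap (0 : Fin (n + 2)) 1) = w ∘ ⇑(Equiv.swap 0 1) := rfl
      have hss : ∀ j : Fin n, Equiv.swap (0 : Fin (n + 2)) 1 j.succ.succ = j.succ.succ := by
        intro j
        apply Equiv.swap_apply_of_ne_of_ne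
        · exact Fin.succ_ne_zero _
        · rw [← Fin.succ_zero_eq_one]
          exact fun h => Fin.succ_ne_zero _ (Fin.succ_injective _ h)
      have htt : Fin.tail (Fin.tail (w ∘ ⇑(Equiv.swap (0 : Fin (n + 2)) 1))) =
          Fin.tail (Fin.tail w) := by
        ext j
        simp only [Fin.tail, Function.comp_apply, hss]
      rw [hw', hlDelta_succ_succ, hlDelta_succ_succ, htt]
      simp only [Function.comp_apply, Equiv.swap_apply_left, Equiv.swap_apply_right, hss]
      have key := hl_swap_identity t (w 0) (w 1) (hwa.1.ne (by simp)) (hwa.2 0) (hwa.2 1) (lam 1)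
      set D := hlDelta t n (Fin.tail (Fin.tail w))
      set P0 := ∏ j : Fin n, hlU t (w 0) (w j.succ.succ)
      set P1 := ∏ j : Fin n, hlU t (w 1) (w j.succ.succ)
      set EE := (hlUE t n (Fin.tail (Fin.tail lam)) (Fin.tail (Fin.tail w))).2
      linear_combination (EE * P0 * P1 * D) * key

/-! ### Nonnegativity at positive points -/

/-- The cone of functions that are nonnegative combinations of monomials `w^μ` with `μ` a partition
whose parts are at most `b`. -/
def monoCone (n b : ℕ) : Submodule NNReal ((Fin n → ℝ) → ℝ) :=
  Submodule.span NNReal {f | ∃ μ : Fin n → ℕ, Antitone μ ∧ (∀ i, μ i ≤ b) ∧ f = monoFun μ}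

lemma monoCone_mul {n b : ℕ} {a : ℝ} (ha : 0 ≤ a) {f : (Fin n → ℝ) → ℝ} (hf : f ∈ monoCone n b) :
    (fun w => a * f w) ∈ monoCone n b :=
  (monoCone n b).smul_mem (⟨a, ha⟩ : NNReal) hf

lemma monoCone_add {n b : ℕ} {f g : (Fin n → ℝ) → ℝ} (hf : f ∈ monoCone n b)
    (hg : g ∈ monoCone n b) : (fun w => f w + g w) ∈ monoCone n b :=
  (monoCone n b).add_mem hf hg

lemma monoCone_mono {n b c : ℕ} (hbc : b ≤ c) : monoCone n b ≤ monoCone n c := by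
  apply Submodule.span_mono
  rintro f ⟨μ, h1, h2, h3⟩
  exact ⟨μ, h1, fun i => (h2 i).trans hbc, h3⟩

lemma monoCone_cons {n b c : ℕ} (hbc : b ≤ c) {f : (Fin n → ℝ) → ℝ} (hf : f ∈ monoCone n b) :
    (fun w : Fin (n + 1) → ℝ => w 0 ^ c * f (Fin.tail w)) ∈ monoCone (n + 1) c := by
  induction hf using Submodule.span_induction with
  | mem f hf =>
    obtain ⟨μ, h1, h2, rfl⟩ := hf
    refine Submodule.subset_span
      ⟨Fin.cons c μ, antitone_cons h1 fun j => (h2 j).trans hbc, ?_, ?_⟩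
    · intro i
      refine Fin.cases (by simp) (fun j => ?_) i
      simpa using (h2 j).trans hbc
    · ext w
      simp [monoFun, Fin.prod_univ_succ, Fin.tail]
  | zero =>
    convert (monoCone (n + 1) c).zero_mem using 1
    ext w
    simp
  | add f g _ _ hf hg => simpa [mul_add] using monoCone_add hf hg
  | smul a f _ hf =>
    convert monoCone_mul a.2 hf using 2 with w
    simp only [Pi.smul_apply, NNReal.smul_def, smul_eq_mul, NNReal.val_eq_coe]
    ring

/-- The recursion defining `U_λ` and `E_λ` only prepends exponents at least as large as the
following ones, so every monomial that occurs is indexed by a partition. -/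
lemma hlUE_mem {t : ℝ} (ht0 : 0 ≤ t) (ht1 : t ≤ 1) (n : ℕ) (lam : Fin (n + 1) → ℕ)
    (hl : Antitone lam) :
    (fun w => (hlUE t n lam w).1) ∈ monoCone n (lam 0) ∧
      (fun w => (hlUE t n lam w).2) ∈ monoCone n (lam 0) := by
  induction n with
  | zero =>
    have : (fun _ : Fin 0 → ℝ => (1 : ℝ)) ∈ monoCone 0 (lam 0) :=
      Submodule.subset_span ⟨fun i => i.elim0, fun i => i.elim0, fun i => i.elim0, by
        ext w; simp [monoFun]⟩
    exact ⟨this, this⟩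
  | succ n ih =>
    obtain ⟨h1, h2⟩ := ih (Fin.tail lam) (antitone_tail hl)
    have hle : lam 1 ≤ lam 0 := hl (Fin.zero_le 1)
    have ht : (Fin.tail lam) 0 = lam 1 := rfl
    rw [ht] at h1 h2
    have hsum : (fun w : Fin (n + 1) → ℝ => (∑ c ∈ Finset.Ioc (lam 1) (lam 0), w 0 ^ c) *
        (hlUE t n (Fin.tail lam) (Fin.tail w)).2) ∈ monoCone (n + 1) (lam 0) := by
      have := (monoCone (n + 1) (lam 0)).sum_mem (t := Finset.Ioc (lam 1) (lam 0))
        (f := fun c (w : Fin (n + 1) → ℝ) =>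
          w 0 ^ c * (hlUE t n (Fin.tail lam) (Fin.tail w)).2) (fun c hc => by
          rw [Finset.mem_Ioc] at hc
          exact monoCone_mono hc.2 (monoCone_cons hc.1.le h2))
      convert this using 1
      ext w
      simp [Finset.sum_mul]
    have hU := monoCone_add (monoCone_mul (sub_nonneg.2 ht1) hsum)
      (monoCone_mono hle (monoCone_cons le_rfl h1))
    exact ⟨hU, monoCone_add hU (monoCone_mul ht0 (monoCone_cons hle h2))⟩

lemma hlSym_nonneg {t : ℝ} {n b : ℕ} {x : Fin n → ℝ}
    (hx : ∀ μ : Fin n → ℕ, Antitone μ → 0 ≤ hlR t n μ x) {f : (Fin n → ℝ) → ℝ}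
    (hf : f ∈ monoCone n b) : 0 ≤ hlSym t n f x := by
  induction hf using Submodule.span_induction with
  | mem f hf =>
    obtain ⟨μ, h1, -, rfl⟩ := hf
    exact hx μ h1
  | zero => simp [hlSym]
  | add f g _ _ hf hg =>
    have := hlSym_add t n f g x
    exact (add_nonneg hf hg).trans_eq this.symm
  | smul a f _ hf =>
    have := hlSym_const_mul t n a f x
    exact (mul_nonneg a.2 hf).trans_eq this.symm

/-- A tuple of positive, pairwise distinct reals. -/
def PosInj {n : ℕ} (x : Fin n → ℝ) : Prop := Function.Injective x ∧ ∀ i, 0 < x i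

lemma hlR_smul (t : ℝ) (n : ℕ) (lam : Fin n → ℕ) (c : ℝ) (hc : c ≠ 0) (x : Fin n → ℝ) :
    hlR t n lam (fun i => c * x i) = c ^ (∑ i, lam i) * hlR t n lam x := by
  unfold hlR hlSym
  rw [Finset.mul_sum]
  refine Finset.sum_congr rfl fun σ _ => ?_
  have h1 : hlDelta t n ((fun i => c * x i) ∘ σ) = hlDelta t n (x ∘ σ) := by
    refine Finset.prod_congr rfl fun p _ => ?_
    simp only [hlU, Function.comp_apply]
    rw [← mul_div_mul_left _ (x (σ p.1) - x (σ p.2)) hc]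
    ring_nf
  rw [h1, ← mul_assoc]
  congr 1
  simp only [monoFun, Function.comp_apply, mul_pow, Finset.prod_mul_distrib,
    Finset.prod_pow_eq_pow_sum]

/-- Dividing by the first entry reduces to tuples starting with `1`. -/
lemma PosInj.scale {n : ℕ} {x : Fin (n + 1) → ℝ} (hx : PosInj x) :
    ∃ z : Fin n → ℝ, PosInj z ∧ Adm z ∧ x = fun i => x 0 * (Fin.cons 1 z : Fin (n + 1) → ℝ) i := by
  have h0 := (hx.2 0).ne'
  have hz : ∀ i j, x i / x 0 = x j / x 0 → i = j := fun i j h =>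
    hx.1 ((div_left_inj' h0).1 h)
  refine ⟨fun i => x i.succ / x 0, ⟨fun i j h => Fin.succ_injective _ (hz _ _ h),
    fun i => div_pos (hx.2 _) (hx.2 0)⟩, ⟨fun i j h => Fin.succ_injective _ (hz _ _ h),
    fun i h => ?_⟩, ?_⟩
  · exact Fin.succ_ne_zero i (hz _ _ (h.trans (div_self h0).symm))
  · ext i
    refine Fin.cases (by simp) (fun j => ?_) i
    simp only [Fin.cons_succ]
    field_simp

lemma hlR_nonneg {t : ℝ} (ht0 : 0 ≤ t) (ht1 : t ≤ 1) (n : ℕ) (lam : Fin n → ℕ)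
    (hl : Antitone lam) (x : Fin n → ℝ) (hx : PosInj x) : 0 ≤ hlR t n lam x := by
  induction n with
  | zero => simp [hlR, hlSym, monoFun, hlDelta]
  | succ n ih =>
    obtain ⟨z, hz, hz', hxz⟩ := hx.scale
    rw [hxz, hlR_smul _ _ _ _ (hx.2 0).ne', hlR_cons_one, (hlSym_hlW t n).1 lam hl z hz']
    exact mul_nonneg (pow_nonneg (hx.2 0).le _)
      (hlSym_nonneg (fun μ hμ => ih μ hμ z hz) (hlUE_mem ht0 ht1 n lam hl).2)

lemma hlUE_zero (t : ℝ) (n : ℕ) :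
    ∃ c : ℝ, (0 ≤ t → 0 < c) ∧ ∀ w, hlUE t n (fun _ => 0) w = (1, c) := by
  induction n with
  | zero => exact ⟨1, fun _ => one_pos, fun w => rfl⟩
  | succ n ih =>
    obtain ⟨c, hc, h⟩ := ih
    refine ⟨1 + t * c, fun ht => by have := mul_nonneg ht (hc ht).le; linarith, fun w => ?_⟩
    have ht : Fin.tail (fun _ : Fin (n + 2) => 0) = (fun _ : Fin (n + 1) => (0 : ℕ)) := rfl
    simp [hlUE, ht, h]

/-- For the empty partition the symmetrization is a positive constant (in fact `v_∅(t)`). -/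
lemma hlR_zero {t : ℝ} (ht0 : 0 ≤ t) (n : ℕ) :
    ∃ c : ℝ, 0 < c ∧ ∀ x : Fin n → ℝ, PosInj x → hlR t n (fun _ => 0) x = c := by
  induction n with
  | zero => exact ⟨1, one_pos, fun x _ => by simp [hlR, hlSym, monoFun, hlDelta]⟩
  | succ n ih =>
    obtain ⟨c, hc, h⟩ := ih
    obtain ⟨e, he, h'⟩ := hlUE_zero t n
    refine ⟨e * c, mul_pos (he ht0) hc, fun x hx => ?_⟩
    obtain ⟨z, hz, hz', hxz⟩ := hx.scale
    rw [hxz, hlR_smul _ _ _ _ (hx.2 0).ne', hlR_cons_one,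
      (hlSym_hlW t n).1 _ (fun _ _ _ => le_rfl) z hz', ← h z hz, hlR,
      ← hlSym_const_mul t n e]
    simp [h', monoFun]

/-! ### The Hall–Littlewood polynomials -/

lemma prod_lt_sub_perm {S : Type*} [CommRing S] (n : ℕ) (v : Fin n → S)
    (σ : Equiv.Perm (Fin n)) :
    ∏ p ∈ Finset.univ.filter (fun p : Fin n × Fin n => p.1 < p.2), (v (σ p.1) - v (σ p.2)) =
      ((Equiv.Perm.sign σ : ℤ) : S) *
        ∏ p ∈ Finset.univ.filter (fun p : Fin n × Fin n => p.1 < p.2), (v p.1 - v p.2) := by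
  have h : ∀ v : Fin n → S,
      ∏ p ∈ Finset.univ.filter (fun p : Fin n × Fin n => p.1 < p.2), (v p.1 - v p.2) =
        (Matrix.vandermonde fun i => -v i).det := by
    intro v
    rw [Matrix.det_vandermonde, Finset.prod_filter, Fintype.prod_prod_type]
    refine Finset.prod_congr rfl fun i _ => ?_
    rw [← Finset.prod_filter]
    refine Finset.prod_congr (by ext; simp) fun j _ => by ring
  rw [h v, ← Matrix.det_permute σ, ← h (fun i => v (σ i)) |>.symm]
  rfl

lemma rename_vand (n : ℕ) (σ : Equiv.Perm (Fin n)) :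
    rename σ (vand n) = ((Equiv.Perm.sign σ : ℤ) : MvPolynomial (Fin n) ℝ) * vand n := by
  rw [vand, map_prod, ← prod_lt_sub_perm n (X : Fin n → MvPolynomial (Fin n) ℝ) σ]
  simp

lemma rename_hlNumerator (n : ℕ) (t : ℝ) (lam : Fin n → ℕ) (σ : Equiv.Perm (Fin n)) :
    rename σ (hlNumerator n t lam) =
      ((Equiv.Perm.sign σ : ℤ) : MvPolynomial (Fin n) ℝ) * hlNumerator n t lam := by
  unfold hlNumerator
  rw [map_sum, Finset.mul_sum]
  conv_rhs => rw [← Equiv.sum_comp (Equiv.mulLeft σ)]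
  refine Finset.sum_congr rfl fun τ _ => ?_
  rw [map_smul, rename_rename, smul_eq_C_mul, smul_eq_C_mul, ← mul_assoc, Equiv.coe_mulLeft,
    Equiv.Perm.coe_mul]
  congr 1
  have : (Equiv.Perm.sign σ : ℤ) * (Equiv.Perm.sign σ : ℤ) = 1 := by
    rw [← Units.val_mul, Int.units_mul_self, Units.val_one]
  have h2 : ((Equiv.Perm.sign σ : ℤ) : MvPolynomial (Fin n) ℝ) *
      ((Equiv.Perm.sign σ : ℤ) : MvPolynomial (Fin n) ℝ) = 1 := by
    rw [← Int.cast_mul, this, Int.cast_one]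
  simp only [Units.val_mul, Int.cast_mul, map_mul, map_intCast]
  rw [← mul_assoc, h2, one_mul]

lemma eval_vand {n : ℕ} (x : Fin n → ℝ) : eval x (vand n) =
    ∏ p ∈ Finset.univ.filter (fun p : Fin n × Fin n => p.1 < p.2), (x p.1 - x p.2) := by
  simp [vand, map_prod]

lemma eval_vand_ne_zero {n : ℕ} {x : Fin n → ℝ} (hx : Function.Injective x) :
    eval x (vand n) ≠ 0 := by
  rw [eval_vand, Finset.prod_ne_zero_iff]
  intro p hp
  exact sub_ne_zero.2 (hx.ne (by simpa using (Finset.mem_filter.1 hp).2.ne))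

lemma vand_ne_zero (n : ℕ) : vand n ≠ 0 := fun h =>
  eval_vand_ne_zero (n := n) (x := fun i => (i : ℝ))
    (fun i j hij => Fin.ext (Nat.cast_injective hij)) (by rw [h, map_zero])

lemma eval_hlNumerator {n : ℕ} (t : ℝ) (lam : Fin n → ℕ) {x : Fin n → ℝ}
    (hx : Function.Injective x) :
    eval x (hlNumerator n t lam) = eval x (vand n) * hlR t n lam x := by
  unfold hlNumerator hlR hlSym
  rw [map_sum, Finset.mul_sum]
  refine Finset.sum_congr rfl fun σ _ => ?_
  have h1 := prod_lt_sub_perm n x σ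
  have hs : ((Equiv.Perm.sign σ : ℤ) : ℝ) * ((Equiv.Perm.sign σ : ℤ) : ℝ) = 1 := by
    rw [← Int.cast_mul, ← Units.val_mul, Int.units_mul_self, Units.val_one, Int.cast_one]
  have hne := eval_vand_ne_zero (hx.comp σ.injective)
  have h3 : hlDelta t n (x ∘ σ) = eval (x ∘ σ) (tvand n t) / eval (x ∘ σ) (vand n) := by
    rw [eval_vand, tvand, map_prod, ← Finset.prod_div_distrib]
    refine Finset.prod_congr rfl fun p _ => ?_
    simp [hlU]
  have h4 : eval (x ∘ σ) (vand n) = ((Equiv.Perm.sign σ : ℤ) : ℝ) * eval x (vand n) := by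
    rw [eval_vand, eval_vand, ← h1]; rfl
  have h5 : eval x (vand n) = ((Equiv.Perm.sign σ : ℤ) : ℝ) * eval (x ∘ σ) (vand n) := by
    rw [h4, ← mul_assoc, hs, one_mul]
  rw [h3, h5, smul_eval, eval_rename, map_mul]
  simp only [monoFun, map_prod, map_pow, eval_X]
  field_simp

/-- Modulo `X i - X j`, substituting `X j` for `X i` changes nothing. -/
lemma sub_dvd_iff {n : ℕ} (i j : Fin n) (p : MvPolynomial (Fin n) ℝ) :
    X i - X j ∣ p ↔ rename (Function.update id i j) p = 0 := by
  constructor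
  · rintro ⟨q, rfl⟩
    by_cases h : j = i
    · simp [h]
    · simp [Function.update_of_ne h]
  · intro h
    rw [← Ideal.mem_span_singleton, ← Ideal.Quotient.eq_zero_iff_mem]
    let I := Ideal.span {(X i - X j : MvPolynomial (Fin n) ℝ)}
    have key : (Ideal.Quotient.mkₐ ℝ I).comp (rename (Function.update id i j)) =
        Ideal.Quotient.mkₐ ℝ I := by
      ext k
      by_cases hk : k = i
      · subst hk
        simp only [AlgHom.comp_apply, rename_X, Function.update_self, Ideal.Quotient.mkₐ_eq_mk]
        rw [eq_comm, Ideal.Quotient.eq]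
        exact Ideal.mem_span_singleton_self _
      · simp [Function.update_of_ne hk]
    have := congrArg (fun φ => φ p) key
    simpa [h] using this.symm

lemma prime_sub {n : ℕ} {i j : Fin n} (hij : i ≠ j) :
    Prime (X i - X j : MvPolynomial (Fin n) ℝ) := by
  refine ⟨sub_ne_zero.2 fun h => hij (X_injective h), fun h => ?_, fun a b h => ?_⟩
  · have : (X i - X j : MvPolynomial (Fin n) ℝ) ∣ 1 := h.dvd
    rw [sub_dvd_iff, map_one] at this
    exact one_ne_zero this
  · rwa [sub_dvd_iff, map_mul, mul_eq_zero, ← sub_dvd_iff, ← sub_dvd_iff] at h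

/-- The numerator is alternating, hence divisible by each of the pairwise coprime factors
`a_i − a_j`. -/
lemma vand_dvd_hlNumerator (n : ℕ) (t : ℝ) (lam : Fin n → ℕ) : vand n ∣ hlNumerator n t lam := by
  refine Finset.prod_dvd_of_isRelPrime ?_ ?_
  · rintro ⟨i, j⟩ hij ⟨k, l⟩ hkl hne
    simp only [Finset.coe_filter, Finset.mem_univ, true_and, Set.mem_ofPred_eq] at hij hkl
    have hirr := (prime_sub hij.ne).irreducible
    refine (Irreducible.isRelPrime_iff_not_dvd hirr).2 fun hd => ?_
    rw [sub_dvd_iff, map_sub, rename_X, rename_X, sub_eq_zero] at hd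
    have hd := X_injective hd
    -- substituting `j` for `i` identifies `k < l` only if `(k, l) = (i, j)`
    simp only [Function.update_apply, id] at hd
    apply hne
    split_ifs at hd with h1 h2 h2
    · exact absurd (h1.trans h2.symm) hkl.ne
    · rw [h1, hd]
    · rw [h2, hd] at hkl
      exact absurd (hkl.trans hij) (lt_irrefl _)
    · exact absurd hd hkl.ne
  · rintro ⟨i, j⟩ hij
    have hij := (Finset.mem_filter.1 hij).2
    simp only at hij
    rw [sub_dvd_iff]
    have h1 := rename_hlNumerator n t lam (Equiv.swap i j)
    rw [Equiv.Perm.sign_swap hij.ne] at h1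
    have h2 := congrArg (rename (Function.update id i j)) h1
    have h3 : Function.update id i j ∘ Equiv.swap i j = Function.update id i j := by
      ext k
      by_cases hki : k = i
      · subst hki; simp [Function.update_of_ne hij.ne']
      · by_cases hkj : k = j
        · subst hkj; simp [Function.update_of_ne hki]
        · simp [Equiv.swap_apply_of_ne_of_ne hki hkj]
    rw [rename_rename, h3] at h2
    simp only [Units.val_neg, Units.val_one, Int.cast_neg, Int.cast_one, neg_mul, one_mul,
      map_neg] at h2
    exact self_eq_neg.1 h2

/-- The unnormalised Hall–Littlewood polynomial `v_λ(t) P_λ(a;t)`, for an arbitrary exponent. -/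
def hlPoly (n : ℕ) (t : ℝ) (lam : Fin n → ℕ) : MvPolynomial (Fin n) ℝ :=
  (vand_dvd_hlNumerator n t lam).choose

lemma hlPoly_spec (n : ℕ) (t : ℝ) (lam : Fin n → ℕ) :
    hlNumerator n t lam = vand n * hlPoly n t lam :=
  (vand_dvd_hlNumerator n t lam).choose_spec

lemma eval_hlPoly {n : ℕ} (t : ℝ) (lam : Fin n → ℕ) {x : Fin n → ℝ}
    (hx : Function.Injective x) : eval x (hlPoly n t lam) = hlR t n lam x := by
  have := eval_hlNumerator t lam hx
  rw [hlPoly_spec, map_mul] at this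
  exact mul_left_cancel₀ (eval_vand_ne_zero hx) this

lemma hlPoly_mem (n : ℕ) (t : ℝ) (lam : Fin n → ℕ) :
    hlPoly n t lam ∈ symmetricSubalgebra (Fin n) ℝ := by
  rw [mem_symmetricSubalgebra]
  intro σ
  have h := rename_hlNumerator n t lam σ
  rw [hlPoly_spec, map_mul, rename_vand, mul_assoc] at h
  have hs : ((Equiv.Perm.sign σ : ℤ) : MvPolynomial (Fin n) ℝ) ≠ 0 := by
    rcases Int.units_eq_one_or (Equiv.Perm.sign σ) with h | h <;> simp [h]
  exact mul_left_cancel₀ (vand_ne_zero n) (mul_left_cancel₀ hs h)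

lemma vlam_pos {t : ℝ} (ht0 : 0 ≤ t) (ht1 : t < 1) (n : ℕ) (lam : Fin n → ℕ) :
    0 < vlam n t lam := by
  refine Finset.prod_pos fun k _ => Finset.prod_pos fun i _ => div_pos ?_ (sub_pos.2 ht1)
  exact sub_pos.2 (pow_lt_one₀ ht0 ht1 (Nat.succ_ne_zero i))

lemma isHL_iff {t : ℝ} (ht0 : 0 ≤ t) (ht1 : t < 1) {n : ℕ} {lam : Fin n → ℕ}
    {P : MvPolynomial (Fin n) ℝ} :
    IsHL n t lam P ↔ P = (vlam n t lam)⁻¹ • hlPoly n t lam := by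
  have hv := (vlam_pos ht0 ht1 n lam).ne'
  rw [IsHL, hlPoly_spec, mul_comm (vand n), mul_left_inj' (vand_ne_zero n), ← smul_eq_C_mul,
    eq_inv_smul_iff₀ hv]

lemma eq_of_eval_posInj {n : ℕ} {p q : MvPolynomial (Fin n) ℝ}
    (h : ∀ x, PosInj x → eval x p = eval x q) : p = q := by
  refine mul_right_cancel₀ (vand_ne_zero n) ?_
  refine MvPolynomial.funext_set (fun _ => Set.Ioi (0 : ℝ)) (fun _ => Set.Ioi_infinite 0) ?_
  intro x hx
  rw [map_mul, map_mul]
  by_cases hi : Function.Injective x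
  · rw [h x ⟨hi, fun i => hx i (Set.mem_univ i)⟩]
  · have : eval x (vand n) = 0 := by
      rw [eval_vand]
      simp only [Function.Injective, not_forall] at hi
      obtain ⟨i, j, hij, hne⟩ := hi
      rcases lt_or_gt_of_ne hne with hlt | hlt
      · exact Finset.prod_eq_zero (i := (i, j)) (by simpa using hlt) (by simp [hij])
      · exact Finset.prod_eq_zero (i := (j, i)) (by simpa using hlt) (by simp [hij])
    rw [this, mul_zero, mul_zero]

lemma hlPoly_zero {t : ℝ} (ht0 : 0 ≤ t) (n : ℕ) :
    ∃ c : ℝ, 0 < c ∧ hlPoly n t (fun _ => 0) = C c := by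
  obtain ⟨c, hc, h⟩ := hlR_zero ht0 n
  refine ⟨c, hc, eq_of_eval_posInj fun x hx => ?_⟩
  rw [eval_hlPoly t _ hx.1, h x hx, eval_C]

/-! ### Removing a variable -/

/-- The operator `∏_{x ∈ xs} (T − x)` applied to the sequence `a`, where `T` is the shift. -/
def shiftSub {R : Type*} [CommRing R] : List R → (ℕ → R) → ℕ → R
  | [], a => a
  | x :: xs, a => shiftSub xs fun k => a (k + 1) - x * a k

lemma map_shiftSub {R S : Type*} [CommRing R] [CommRing S] (φ : R →+* S) (xs : List R)
    (a : ℕ → R) (k : ℕ) : φ (shiftSub xs a k) = shiftSub (xs.map φ) (fun k => φ (a k)) k := by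
  induction xs generalizing a with
  | nil => rfl
  | cons x xs ih => simp [shiftSub, ih]

lemma shiftSub_sum_pow {R ι : Type*} [CommRing R] [Fintype ι] (xs : List R) (y c : ι → R)
    (k : ℕ) : shiftSub xs (fun k => ∑ i, y i ^ k * c i) k =
      ∑ i, y i ^ k * (c i * (xs.map fun x => y i - x).prod) := by
  induction xs generalizing c with
  | nil => simp [shiftSub]
  | cons x xs ih =>
    have : (fun k => ∑ i, y i ^ (k + 1) * c i - x * ∑ i, y i ^ k * c i) =
        fun k => ∑ i, y i ^ k * (c i * (y i - x)) := by
      ext k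
      rw [Finset.mul_sum, ← Finset.sum_sub_distrib]
      exact Finset.sum_congr rfl fun i _ => by ring
    rw [shiftSub, this, ih]
    exact Finset.sum_congr rfl fun i _ => by rw [List.map_cons, List.prod_cons]; ring

lemma shiftSub_shift {R : Type*} [CommRing R] (xs : List R) (a : ℕ → R) (s k : ℕ) :
    shiftSub xs (fun k => a (s + k)) k = shiftSub xs a (s + k) := by
  induction xs generalizing a with
  | nil => rfl
  | cons x xs ih =>
    rw [shiftSub, shiftSub]
    exact ih fun k => a (k + 1) - x * a k

/-- Annihilating the contributions of all variables but the `i`-th to the sequence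
`k ↦ v P_{(k, μ)}` isolates `P_μ` in the remaining variables. -/
lemma shiftSub_hlPoly (m : ℕ) (t : ℝ) (μ : Fin m → ℕ) (i : Fin (m + 1)) (k : ℕ) :
    shiftSub (List.ofFn fun j => (X (i.succAbove j) : MvPolynomial (Fin (m + 1)) ℝ))
        (fun k => hlPoly (m + 1) t (Fin.cons k μ)) k =
      X i ^ k * ((∏ j, (X i - C t * X (i.succAbove j))) *
        rename i.succAbove (hlPoly m t μ)) := by
  refine eq_of_eval_posInj fun x hx => ?_
  rw [map_shiftSub]
  have hinj : Function.Injective (x ∘ i.succAbove) := hx.1.comp Fin.succAbove_right_injective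
  simp only [eval_hlPoly t _ hx.1, hlR_succ, shiftSub_sum_pow]
  rw [Finset.sum_eq_single i]
  · simp only [map_mul, map_pow, eval_X, map_prod, map_sub, eval_C, eval_rename,
      eval_hlPoly t _ hinj, List.map_ofFn, List.prod_ofFn, Function.comp_apply]
    have : ∏ j, (x i - t * x (i.succAbove j)) =
        (∏ j, hlU t (x i) (x (i.succAbove j))) * ∏ j, (x i - x (i.succAbove j)) := by
      rw [← Finset.prod_mul_distrib]
      refine Finset.prod_congr rfl fun j _ => ?_
      have : x i - x (i.succAbove j) ≠ 0 := sub_ne_zero.2 (hx.1.ne (Fin.succAbove_ne i j).symm)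
      rw [hlU, div_mul_cancel₀ _ this]
    rw [this]
    ring
  · intro p _ hp
    obtain ⟨j, rfl⟩ := Fin.exists_succAbove_eq hp
    have : (List.map (fun y => x (i.succAbove j) - y) (List.map (⇑(eval x))
        (List.ofFn fun j => (X (i.succAbove j) : MvPolynomial (Fin (m + 1)) ℝ)))).prod = 0 := by
      rw [List.map_ofFn, List.map_ofFn, List.prod_ofFn]
      exact Finset.prod_eq_zero (Finset.mem_univ j) (by simp)
    rw [this]
    ring
  · simp

lemma shiftSub_aeval (m : ℕ) (t : ℝ) (μ : Fin m → ℕ) (α : Fin (m + 1) → ℂ) (i : Fin (m + 1))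
    (k : ℕ) :
    shiftSub (List.ofFn (α ∘ i.succAbove))
        (fun k => aeval α (hlPoly (m + 1) t (Fin.cons k μ))) k =
      α i ^ k * ((∏ j, (α i - t * α (i.succAbove j))) *
        aeval (α ∘ i.succAbove) (hlPoly m t μ)) := by
  have h := congrArg (aeval α : MvPolynomial (Fin (m + 1)) ℝ →ₐ[ℝ] ℂ).toRingHom
    (shiftSub_hlPoly m t μ i k)
  rw [map_shiftSub] at h
  simpa [List.map_ofFn, Function.comp_def, aeval_rename, map_prod] using h

/-! ### Generating functions -/

lemma summable_of_recurrence {y w : ℕ → ℂ} {q : ℂ} (hq : ‖q‖ < 1)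
    (h : ∀ k, y (k + 1) = q * y k + w k) (hw : Summable w) : Summable y := by
  refine Summable.of_norm ?_
  have hw' := hw.norm
  refine summable_of_sum_range_le (c := (‖y 0‖ + ∑' k, ‖w k‖) / (1 - ‖q‖))
    (fun _ => norm_nonneg _) fun n => ?_
  rw [le_div_iff₀ (sub_pos.2 hq)]
  have h1 : ∑ k ∈ Finset.range (n + 1), ‖y k‖ ≤
      ‖y 0‖ + (‖q‖ * ∑ k ∈ Finset.range n, ‖y k‖ + ∑' k, ‖w k‖) := by
    rw [Finset.sum_range_succ', add_comm]
    gcongr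
    calc ∑ k ∈ Finset.range n, ‖y (k + 1)‖
        ≤ ∑ k ∈ Finset.range n, (‖q‖ * ‖y k‖ + ‖w k‖) := by
          refine Finset.sum_le_sum fun k _ => ?_
          rw [h k, ← norm_mul]
          exact norm_add_le _ _
      _ = ‖q‖ * ∑ k ∈ Finset.range n, ‖y k‖ + ∑ k ∈ Finset.range n, ‖w k‖ := by
          rw [Finset.sum_add_distrib, Finset.mul_sum]
      _ ≤ _ := by
          gcongr
          exact hw'.sum_le_tsum _ fun _ _ => norm_nonneg _
  have h2 : ∑ k ∈ Finset.range n, ‖y k‖ ≤ ∑ k ∈ Finset.range (n + 1), ‖y k‖ := by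
    rw [Finset.sum_range_succ]
    exact le_add_of_nonneg_right (norm_nonneg _)
  linarith

/-- Applying `∏_x (T − x)` to a sequence multiplies its generating function by `∏_x (1 − x z)`, up
to a polynomial and the power of `z` coming from the shifts. -/
lemma shiftSub_generating (xs : List ℂ) (a : ℕ → ℂ) :
    ∃ p : Polynomial ℂ, ∀ z : ℂ, (∀ x ∈ xs, ‖x * z‖ < 1) →
      Summable (fun k => shiftSub xs a k * z ^ k) →
      Summable (fun k => a k * z ^ k) ∧
      (xs.map fun x => 1 - x * z).prod * ∑' k, a k * z ^ k =
        p.eval z + z ^ xs.length * ∑' k, shiftSub xs a k * z ^ k := by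
  induction xs generalizing a with
  | nil => exact ⟨0, fun z _ hs => ⟨hs, by simp [shiftSub]⟩⟩
  | cons x xs ih =>
    obtain ⟨p, hp⟩ := ih fun k => a (k + 1) - x * a k
    refine ⟨Polynomial.X * p + Polynomial.C (a 0) *
      (xs.map fun y => 1 - Polynomial.C y * Polynomial.X).prod, fun z hz hs => ?_⟩
    obtain ⟨h1, h2⟩ := hp z (fun y hy => hz y (List.mem_cons_of_mem _ hy)) hs
    have hsum : Summable (fun k => a k * z ^ k) :=
      summable_of_recurrence (hz x List.mem_cons_self) (fun k => by ring) (h1.mul_left z)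
    refine ⟨hsum, ?_⟩
    have h3 : z * ∑' k, (a (k + 1) - x * a k) * z ^ k =
        (1 - x * z) * ∑' k, a k * z ^ k - a 0 := by
      have h4 := hsum.tsum_eq_zero_add
      have h5 : ∑' k, z * ((a (k + 1) - x * a k) * z ^ k) =
          ∑' k, (a (k + 1) * z ^ (k + 1) - x * z * (a k * z ^ k)) :=
        tsum_congr fun k => by ring
      rw [← tsum_mul_left, h5, Summable.tsum_sub ((summable_nat_add_iff 1).2 hsum)
        (hsum.mul_left _), tsum_mul_left]
      simp only [pow_zero, mul_one] at h4
      linear_combination -h4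
    have h6 : (xs.map fun y => 1 - Polynomial.C y * Polynomial.X).prod.eval z =
        (xs.map fun y => 1 - y * z).prod := by
      rw [Polynomial.eval_list_prod, List.map_map]
      simp [Function.comp_def]
    simp only [List.map_cons, List.prod_cons, List.length_cons, Polynomial.eval_add,
      Polynomial.eval_mul, Polynomial.eval_X, Polynomial.eval_C, h6, shiftSub]
    linear_combination z * h2 - (xs.map fun y => 1 - y * z).prod * h3

/-- If the operator `∏_{j ≠ i} (T − α_j)` turns `a` into a multiple of `k ↦ α_i^k`, then the
generating function of `a` is rational with denominator `∏_j (1 − α_j z)`. -/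
lemma generating_rational {m : ℕ} (α : Fin (m + 1) → ℂ) (i : Fin (m + 1)) (a : ℕ → ℂ) (K : ℂ)
    (h : ∀ k, shiftSub (List.ofFn (α ∘ i.succAbove)) a k = α i ^ k * K) :
    ∃ p : Polynomial ℂ, ∀ z : ℂ, (∀ j, ‖α j * z‖ < 1) →
      Summable (fun k => a k * z ^ k) ∧
      (∏ j, (1 - α j * z)) * ∑' k, a k * z ^ k = (1 - α i * z) * p.eval z + z ^ m * K := by
  obtain ⟨p, hp⟩ := shiftSub_generating (List.ofFn (α ∘ i.succAbove)) a
  refine ⟨p, fun z hz => ?_⟩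
  have hb : (fun k => shiftSub (List.ofFn (α ∘ i.succAbove)) a k * z ^ k) =
      fun k => (α i * z) ^ k * K := by
    ext k
    rw [h k, mul_pow]
    ring
  obtain ⟨h1, h2⟩ := hp z (by
    intro x hx
    obtain ⟨j, rfl⟩ := (List.mem_ofFn' _ _).1 hx
    exact hz _) (by
    rw [hb]
    exact (summable_geometric_of_norm_lt_one (hz i)).mul_right K)
  refine ⟨h1, ?_⟩
  have hne : 1 - α i * z ≠ 0 := fun h0 => by
    have := hz i
    rw [← sub_eq_zero.1 h0, norm_one] at this
    exact lt_irrefl _ this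
  rw [hb, tsum_mul_right, tsum_geometric_of_norm_lt_one (hz i), List.length_ofFn, List.map_ofFn,
    List.prod_ofFn] at h2
  rw [Fin.prod_univ_succAbove _ i, mul_assoc]
  simp only [Function.comp_apply] at h2
  rw [h2]
  field_simp

/-! ### Positivity forces nonnegative variables -/

section

open scoped ComplexOrder

lemma nonneg_of_real_mul {c : ℝ} (hc : 0 < c) {w : ℂ} (h : 0 ≤ (c : ℂ) * w) : 0 ≤ w := by
  have h1 : (0 : ℂ) ≤ ((c⁻¹ : ℝ) : ℂ) := Complex.zero_le_real.2 (inv_pos.2 hc).le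
  have h2 := mul_nonneg h1 h
  have hc' : (c : ℂ) ≠ 0 := Complex.ofReal_ne_zero.2 hc.ne'
  rwa [← mul_assoc, Complex.ofReal_inv, inv_mul_cancel₀ hc', one_mul] at h2

/-- If the `α_j` are the roots of a real polynomial, then `∏_j (1 − α_j z)` is real and
positive as long as `z` runs through a real interval starting at `0` without reaching a zero. -/
lemma prod_one_sub_pos {n : ℕ} (α : Fin n → ℂ) (Q : Polynomial ℝ)
    (hQ : Q.map (algebraMap ℝ ℂ) = ∏ j, (Polynomial.X - Polynomial.C (α j))) {z : ℝ}
    (hz0 : 0 ≤ z) (hz : ∀ j, ‖α j‖ * z < 1) :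
    ∃ d : ℝ, 0 < d ∧ ∏ j, (1 - α j * z) = d := by
  let f : ℝ → ℂ := fun s => ∏ j, (1 - α j * s)
  have hcont : Continuous f := by
    refine continuous_finsetProd _ fun j _ => ?_
    fun_prop
  have hreal : ∀ s, f s = ((f s).re : ℂ) := by
    intro s
    by_cases hs : s = 0
    · simp [f, hs]
    · have h1 : f s = ((s ^ n * Q.eval s⁻¹ : ℝ) : ℂ) := by
        have h2 := congrArg (Polynomial.eval ((s⁻¹ : ℝ) : ℂ)) hQ
        rw [Polynomial.eval_prod] at h2
        have h3 : Polynomial.eval ((s⁻¹ : ℝ) : ℂ) (Q.map (algebraMap ℝ ℂ)) =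
            ((Q.eval s⁻¹ : ℝ) : ℂ) := by
          rw [← Complex.coe_algebraMap, Polynomial.eval_map_apply]
        rw [h3] at h2
        rw [Complex.ofReal_mul, h2, Complex.ofReal_pow]
        have h4 : ((s : ℂ)) ^ n = ∏ _j : Fin n, (s : ℂ) := by simp
        rw [h4, ← Finset.prod_mul_distrib]
        refine Finset.prod_congr rfl fun j _ => ?_
        have : (s : ℂ) ≠ 0 := Complex.ofReal_ne_zero.2 hs
        simp only [Polynomial.eval_sub, Polynomial.eval_X, Polynomial.eval_C, Complex.ofReal_inv]
        field_simp
      rw [h1, Complex.ofReal_re]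
  refine ⟨(f z).re, ?_, hreal z⟩
  by_contra hneg
  obtain ⟨s, ⟨hs0, hs1⟩, hs⟩ := intermediate_value_Icc' hz0
    (f := fun s => (f s).re) (Complex.continuous_re.comp hcont).continuousOn
    (show (0 : ℝ) ∈ Set.Icc _ _ from ⟨not_lt.1 hneg, by simp [f]⟩)
  have h0 : f s = 0 := by
    rw [hreal s]
    exact_mod_cast hs
  obtain ⟨j, -, hj⟩ := Finset.prod_eq_zero_iff.1 h0
  have h1 : ‖α j * s‖ = 1 := by rw [← sub_eq_zero.1 hj, norm_one]
  rw [norm_mul, Complex.norm_real, Real.norm_of_nonneg hs0] at h1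
  have := mul_le_mul_of_nonneg_left hs1 (norm_nonneg (α j))
  linarith [hz j]

/-- A variable of largest modulus may be chosen nonnegative: this is Pringsheim's theorem
for the generating function of the one-row polynomials, which has nonnegative coefficients and
whose poles are the `α_j⁻¹`. -/
lemma exists_eq_norm {m : ℕ} {t : ℝ} (ht0 : 0 ≤ t) (ht1 : t < 1) (α : Fin (m + 1) → ℂ)
    (hN : ∀ lam : Fin (m + 1) → ℕ, Antitone lam → 0 ≤ aeval α (hlPoly (m + 1) t lam))
    (i : Fin (m + 1)) (hi : ∀ j, ‖α j‖ ≤ ‖α i‖) (hr : 0 < ‖α i‖) :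
    ∃ j, α j = (‖α i‖ : ℂ) := by
  obtain ⟨c, hc, hc0⟩ := hlPoly_zero ht0 m
  set r := ‖α i‖ with hrdef
  have hαi : α i ≠ 0 := norm_pos_iff.1 hr
  have hrC : (r : ℂ) ≠ 0 := Complex.ofReal_ne_zero.2 hr.ne'
  let a : ℕ → ℂ := fun k => aeval α (hlPoly (m + 1) t (Fin.cons k fun _ => 0))
  have ha : ∀ k, 0 ≤ a k := fun k =>
    hN _ (antitone_cons antitone_const fun _ => Nat.zero_le k)
  let K : ℂ := (∏ j, (α i - t * α (i.succAbove j))) * (c : ℂ)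
  have hK : K ≠ 0 := by
    refine mul_ne_zero (Finset.prod_ne_zero_iff.2 fun j _ h => ?_)
      (Complex.ofReal_ne_zero.2 hc.ne')
    have h1 : r = t * ‖α (i.succAbove j)‖ := by
      rw [hrdef, sub_eq_zero.1 h, norm_mul, Complex.norm_real, Real.norm_of_nonneg ht0]
    have := mul_le_mul_of_nonneg_left (hi (i.succAbove j)) ht0
    nlinarith
  obtain ⟨p, hp⟩ := generating_rational α i a K fun k => by
    have := shiftSub_aeval m t (fun _ => 0) α i k
    rw [hc0] at this
    simpa [a, K] using this
  -- otherwise the generating function is bounded on `(0, 1/r)`, hence by nonnegativity of its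
  -- coefficients also along the ray to its pole at `1 / α i`
  by_contra! hne
  -- `D` is the denominator and `N` the numerator of the generating function
  let D : ℂ → ℂ := fun z => ∏ j, (1 - α j * z)
  let N : ℂ → ℂ := fun z => (1 - α i * z) * p.eval z + z ^ m * K
  have hDc : Continuous D := continuous_finsetProd _ fun j _ => by fun_prop
  have hNc : Continuous N := by
    have := p.continuous
    fun_prop
  have hlt : ∀ u : ℂ, ‖u‖ = r → ∀ s : ℝ, 0 < s → s < 1 → ∀ j, ‖α j * (s / u)‖ < 1 := by
    intro u hu s hs0 hs1 j
    rw [norm_mul, norm_div, hu, Complex.norm_real, Real.norm_of_nonneg hs0.le]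
    calc ‖α j‖ * (s / r) ≤ r * (s / r) := by
          gcongr
          exact hi j
      _ = s := by field_simp
      _ < 1 := hs1
  have key : ∀ s : ℝ, 0 < s → s < 1 →
      ‖N (s / α i)‖ * ‖D (s / r)‖ ≤ ‖D (s / α i)‖ * ‖N (s / r)‖ := by
    intro s hs0 hs1
    obtain ⟨h1, h2⟩ := hp (s / α i) (hlt _ rfl s hs0 hs1)
    obtain ⟨h3, h4⟩ := hp (s / r) (hlt _ (by simp [abs_of_pos hr]) s hs0 hs1)
    change D _ * _ = N _ at h2
    change D _ * _ = N _ at h4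
    rw [← h2, ← h4, norm_mul, norm_mul]
    have h5 : ‖∑' k, a k * (s / α i) ^ k‖ ≤ ‖∑' k, a k * ((s / r : ℂ)) ^ k‖ := by
      have h6 : ∀ k, ‖a k * (s / α i) ^ k‖ = ‖a k‖ * (s / r) ^ k := fun k => by
        rw [norm_mul, norm_pow, norm_div, Complex.norm_real, Real.norm_of_nonneg hs0.le]
      have h7 : ∀ k, a k * ((s / r : ℂ)) ^ k = ((‖a k‖ * (s / r) ^ k : ℝ) : ℂ) := fun k => by
        push_cast
        rw [Complex.norm_of_nonneg' (ha k)]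
      calc ‖∑' k, a k * (s / α i) ^ k‖ ≤ ∑' k, ‖a k * (s / α i) ^ k‖ :=
            norm_tsum_le_tsum_norm h1.norm
        _ = ∑' k, ‖a k‖ * (s / r) ^ k := tsum_congr h6
        _ ≤ ‖((∑' k, ‖a k‖ * (s / r) ^ k : ℝ) : ℂ)‖ := by
            rw [Complex.norm_real]
            exact le_abs_self _
        _ = ‖∑' k, a k * ((s / r : ℂ)) ^ k‖ := by
            rw [Complex.ofReal_tsum, tsum_congr h7]
    calc _ = ‖D (s / α i)‖ * ‖D (s / r)‖ * ‖∑' k, a k * (s / α i) ^ k‖ := by ring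
      _ ≤ ‖D (s / α i)‖ * ‖D (s / r)‖ * ‖∑' k, a k * ((s / r : ℂ)) ^ k‖ := by gcongr
      _ = _ := by ring
  have hlim : ‖N (((1 : ℝ) : ℂ) / α i)‖ * ‖D (((1 : ℝ) : ℂ) / r)‖ ≤
      ‖D (((1 : ℝ) : ℂ) / α i)‖ * ‖N (((1 : ℝ) : ℂ) / r)‖ := by
    have hc1 : Continuous fun s : ℝ => ‖N ((s : ℂ) / α i)‖ * ‖D ((s : ℂ) / r)‖ := by fun_prop
    have hc2 : Continuous fun s : ℝ => ‖D ((s : ℂ) / α i)‖ * ‖N ((s : ℂ) / r)‖ := by fun_prop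
    refine le_of_tendsto_of_tendsto (b := nhdsWithin (1 : ℝ) (Set.Iio 1))
      (hc1.continuousAt.tendsto.mono_left nhdsWithin_le_nhds)
      (hc2.continuousAt.tendsto.mono_left nhdsWithin_le_nhds) ?_
    filter_upwards [Ioo_mem_nhdsLT (zero_lt_one (α := ℝ))] with s hs
    exact key s hs.1 hs.2
  have hD0 : D (((1 : ℝ) : ℂ) / α i) = 0 :=
    Finset.prod_eq_zero (Finset.mem_univ i) (by field_simp; simp)
  have hN1 : N (((1 : ℝ) : ℂ) / α i) ≠ 0 := by
    have : N (((1 : ℝ) : ℂ) / α i) = (1 / α i) ^ m * K := by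
      simp [N, hαi]
    rw [this]
    exact mul_ne_zero (pow_ne_zero _ (one_div_ne_zero hαi)) hK
  have hD1 : D (((1 : ℝ) : ℂ) / r) ≠ 0 := by
    refine Finset.prod_ne_zero_iff.2 fun j _ h => hne j ?_
    have h1 := sub_eq_zero.1 h
    field_simp at h1
    simpa using h1.symm
  rw [hD0, norm_zero, zero_mul] at hlim
  exact absurd hlim (not_le.2 (mul_pos (norm_pos_iff.2 hN1) (norm_pos_iff.2 hD1)))

/-- The positivity hypothesis passes to the remaining variables once a positive variable of
largest modulus is removed. -/
lemma nonneg_succAbove {m : ℕ} {t : ℝ} (ht0 : 0 ≤ t) (ht1 : t < 1) (α : Fin (m + 1) → ℂ)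
    (Q Q' : Polynomial ℝ)
    (hQ : Q.map (algebraMap ℝ ℂ) = ∏ j, (Polynomial.X - Polynomial.C (α j)))
    (i : Fin (m + 1))
    (hQ' : Q'.map (algebraMap ℝ ℂ) =
      ∏ j, (Polynomial.X - Polynomial.C ((α ∘ i.succAbove) j)))
    (hN : ∀ lam : Fin (m + 1) → ℕ, Antitone lam → 0 ≤ aeval α (hlPoly (m + 1) t lam))
    {r : ℝ} (hr : 0 < r) (hir : α i = r) (hi : ∀ j, ‖α j‖ ≤ r) (μ : Fin m → ℕ)
    (hμ : Antitone μ) : 0 ≤ aeval (α ∘ i.succAbove) (hlPoly m t μ) := by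
  set s := ∑ j, μ j with hs
  set w := aeval (α ∘ i.succAbove) (hlPoly m t μ) with hw
  have hrC : (r : ℂ) ≠ 0 := Complex.ofReal_ne_zero.2 hr.ne'
  let b : ℕ → ℂ := fun k => aeval α (hlPoly (m + 1) t (Fin.cons k μ))
  let a : ℕ → ℂ := fun k => b (s + k)
  have ha : ∀ k, 0 ≤ a k := fun k => hN _ (antitone_cons hμ fun j =>
    (Finset.single_le_sum (fun _ _ => Nat.zero_le _) (Finset.mem_univ j)).trans
      (Nat.le_add_right _ _))
  obtain ⟨d', hd', hprod'⟩ := prod_one_sub_pos (α ∘ i.succAbove) Q' hQ' (z := t / r)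
    (by positivity) fun j => by
      calc ‖(α ∘ i.succAbove) j‖ * (t / r) ≤ r * (t / r) := by
            gcongr
            exact hi _
        _ = t := by field_simp
        _ < 1 := ht1
  have hprod : ∏ j, (α i - t * α (i.succAbove j)) = ((r ^ m * d' : ℝ) : ℂ) := by
    rw [Complex.ofReal_mul, ← hprod', Complex.ofReal_pow,
      show (r : ℂ) ^ m = ∏ _j : Fin m, (r : ℂ) by simp, ← Finset.prod_mul_distrib]
    refine Finset.prod_congr rfl fun j _ => ?_
    rw [hir]
    push_cast
    simp only [Function.comp_apply]
    field_simp
  obtain ⟨p, hp⟩ := generating_rational α i a (((r ^ s * (r ^ m * d') : ℝ) : ℂ) * w) fun k => by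
    rw [shiftSub_shift, shiftSub_aeval, hprod, hir]
    push_cast
    ring
  -- the numerator of the generating function, nonnegative on `(0, 1/r)`
  let N : ℝ → ℂ := fun z =>
    (1 - α i * z) * p.eval (z : ℂ) + (z : ℂ) ^ m * (((r ^ s * (r ^ m * d') : ℝ) : ℂ) * w)
  have hNc : Continuous N := by
    have := p.continuous
    fun_prop
  have hpos : ∀ z : ℝ, 0 < z → z < r⁻¹ → 0 ≤ N z := by
    intro z hz0 hz1
    have hlt : ∀ j, ‖α j‖ * z < 1 := fun j => by
      calc ‖α j‖ * z ≤ r * z := by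
            gcongr
            exact hi j
        _ < r * r⁻¹ := by gcongr
        _ = 1 := mul_inv_cancel₀ hr.ne'
    obtain ⟨d, hd, hdz⟩ := prod_one_sub_pos α Q hQ hz0.le hlt
    obtain ⟨-, h2⟩ := hp z fun j => by
      rw [norm_mul, Complex.norm_real, Real.norm_of_nonneg hz0.le]
      exact hlt j
    change _ = N z at h2
    rw [← h2, hdz]
    refine mul_nonneg (Complex.zero_le_real.2 hd.le) (tsum_nonneg fun k => mul_nonneg (ha k) ?_)
    exact pow_nonneg (Complex.zero_le_real.2 hz0.le) k
  have hlim : 0 ≤ N r⁻¹ := by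
    refine ge_of_tendsto (x := nhdsWithin r⁻¹ (Set.Iio r⁻¹))
      (hNc.continuousAt.tendsto.mono_left nhdsWithin_le_nhds) ?_
    filter_upwards [Ioo_mem_nhdsLT (inv_pos.2 hr)] with z hz
    exact hpos z hz.1 hz.2
  have hval : N r⁻¹ = ((r⁻¹ ^ m * (r ^ s * (r ^ m * d')) : ℝ) : ℂ) * w := by
    simp only [N, hir]
    push_cast
    rw [mul_inv_cancel₀ hrC]
    ring
  rw [hval] at hlim
  exact nonneg_of_real_mul (by positivity) hlim

/-- Induction on the number of variables, removing a positive variable of largest modulus. -/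
lemma nonneg_of_hlPoly_nonneg {t : ℝ} (ht0 : 0 ≤ t) (ht1 : t < 1) (n : ℕ) (α : Fin n → ℂ)
    (Q : Polynomial ℝ)
    (hQ : Q.map (algebraMap ℝ ℂ) = ∏ j, (Polynomial.X - Polynomial.C (α j)))
    (hN : ∀ lam : Fin n → ℕ, Antitone lam → 0 ≤ aeval α (hlPoly n t lam)) (j : Fin n) :
    0 ≤ α j := by
  induction n generalizing Q with
  | zero => exact j.elim0
  | succ m ih =>
    obtain ⟨i₀, hi₀⟩ := Finite.exists_max fun j => ‖α j‖
    rcases (norm_nonneg (α i₀)).eq_or_lt with h0 | hr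
    · have : ‖α j‖ ≤ 0 := h0 ▸ hi₀ j
      rw [norm_le_zero_iff.1 this]
    · obtain ⟨i, hir⟩ := exists_eq_norm ht0 ht1 α hN i₀ hi₀ hr
      set r := ‖α i₀‖
      have hroot : Q.IsRoot r := by
        have h1 := congrArg (Polynomial.eval (r : ℂ)) hQ
        rw [Polynomial.eval_prod, Finset.prod_eq_zero (Finset.mem_univ i) (by simp [hir]),
          ← Complex.coe_algebraMap, Polynomial.eval_map_apply] at h1
        exact Complex.ofReal_eq_zero.1 h1
      obtain ⟨Q', rfl⟩ := Polynomial.dvd_iff_isRoot.2 hroot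
      have hQ' : Q'.map (algebraMap ℝ ℂ) =
          ∏ j, (Polynomial.X - Polynomial.C ((α ∘ i.succAbove) j)) := by
        rw [Fin.prod_univ_succAbove _ i, Polynomial.map_mul, hir] at hQ
        refine mul_left_cancel₀ (Polynomial.X_sub_C_ne_zero (r : ℂ)) ?_
        simpa using hQ
      by_cases hji : j = i
      · rw [hji, hir]
        exact Complex.zero_le_real.2 hr.le
      · obtain ⟨j, rfl⟩ := Fin.exists_succAbove_eq hji
        exact ih (α ∘ i.succAbove) Q' hQ'
          (nonneg_succAbove ht0 ht1 α _ Q' hQ i hQ' hN hr hir hi₀) j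

end

/-! ### Homomorphisms as evaluations at complex points -/

/-- Every homomorphism `Λ_n → ℝ` is the evaluation at the complex roots of the real polynomial
`∑_j (−1)^j θ(e_j) X^{n−j}`. -/
lemma exists_complex_point {n : ℕ} (θ : symmetricSubalgebra (Fin n) ℝ →ₐ[ℝ] ℝ) :
    ∃ (α : Fin n → ℂ) (Q : Polynomial ℝ),
      Q.map (algebraMap ℝ ℂ) = ∏ j, (Polynomial.X - Polynomial.C (α j)) ∧
      ∀ f : symmetricSubalgebra (Fin n) ℝ,
        (θ f : ℂ) = aeval α (f : MvPolynomial (Fin n) ℝ) := by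
  let e : ℕ → ℝ := fun j => θ ⟨esymm (Fin n) ℝ j, esymm_isSymmetric _ _ _⟩
  have he0 : e 0 = 1 := by
    have : (⟨esymm (Fin n) ℝ 0, esymm_isSymmetric _ _ _⟩ : symmetricSubalgebra (Fin n) ℝ) = 1 :=
      Subtype.ext (esymm_zero (Fin n) ℝ)
    simp only [e, this, map_one]
  let Q : Polynomial ℝ := ∑ j ∈ Finset.range (n + 1),
    Polynomial.C ((-1) ^ j * e j) * Polynomial.X ^ (n - j)
  have hcoeff : ∀ k ≤ n, Q.coeff (n - k) = (-1) ^ k * e k := by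
    intro k hk
    simp only [Q, Polynomial.finsetSum_coeff, Polynomial.coeff_C_mul, Polynomial.coeff_X_pow]
    rw [Finset.sum_eq_single k]
    · simp
    · intro j hj hjk
      rw [if_neg, mul_zero]
      have := Finset.mem_range.1 hj
      omega
    · intro h
      exact absurd (Finset.mem_range.2 (by omega)) h
  have hdeg : Q.natDegree ≤ n :=
    Polynomial.natDegree_sum_le_of_forall_le _ _ fun j _ =>
      (Polynomial.natDegree_C_mul_X_pow_le _ _).trans (Nat.sub_le _ _)
  have hmonic : Q.Monic :=
    Polynomial.monic_of_natDegree_le_of_coeff_eq_one n hdeg (by simpa [he0] using hcoeff 0)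
  have hnat : Q.natDegree = n := by
    refine le_antisymm hdeg (Polynomial.le_natDegree_of_ne_zero ?_)
    have := hcoeff 0 (Nat.zero_le _)
    rw [Nat.sub_zero] at this
    rw [this, he0]
    norm_num
  set s := (Q.map (algebraMap ℝ ℂ)).roots with hs
  have hsplit := IsAlgClosed.splits (Q.map (algebraMap ℝ ℂ))
  have hcard : Multiset.card s = n := by
    rw [← hsplit.natDegree_eq_card_roots, hmonic.natDegree_map, hnat]
  obtain ⟨α, hα⟩ : ∃ α : Fin n → ℂ, Finset.univ.val.map α = s := by
    obtain ⟨l, hl⟩ := Quot.exists_rep s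
    have hl : (l : Multiset ℂ) = s := hl
    have hlen : l.length = n := by rw [← hcard, ← hl, Multiset.coe_card]
    subst hlen
    exact ⟨l.get, by rw [Fin.univ_val_map, List.ofFn_get, hl]⟩
  have hprod : Q.map (algebraMap ℝ ℂ) = (s.map fun x => Polynomial.X - Polynomial.C x).prod :=
    hsplit.eq_prod_roots_of_monic (hmonic.map _)
  have hesymm : ∀ k ≤ n, ((e k : ℝ) : ℂ) = s.esymm k := by
    intro k hk
    have h1 := Multiset.prod_X_sub_C_coeff s (k := n - k) (by omega)
    rw [← hprod, hcard, Polynomial.coeff_map, hcoeff k hk, Nat.sub_sub_self hk] at h1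
    refine mul_left_cancel₀ (pow_ne_zero k (neg_ne_zero.2 (one_ne_zero (α := ℂ)))) ?_
    rw [← h1]
    simp
  refine ⟨α, Q, ?_, fun f => ?_⟩
  · rw [hprod, ← hα, Multiset.map_map]
    rfl
  · obtain ⟨g, rfl⟩ := esymmAlgHom_fin_surjective ℝ (le_refl n) f
    have key : ((Algebra.ofId ℝ ℂ).comp (θ.comp (esymmAlgHom (Fin n) ℝ n))) =
        ((aeval α).comp (symmetricSubalgebra (Fin n) ℝ).val).comp (esymmAlgHom (Fin n) ℝ n) := by
      refine algHom_ext fun i => ?_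
      have h1 := hesymm (i + 1) (by omega)
      rw [← hα, ← aeval_esymm_eq_multiset_esymm (Fin n) ℝ (i + 1) α] at h1
      simpa [esymmAlgHom, e, Algebra.ofId_apply] using h1
    exact congrArg (fun φ => φ g) key

open scoped ComplexOrder in
lemma exists_nonneg_point {n : ℕ} {t : ℝ} (ht0 : 0 ≤ t) (ht1 : t < 1)
    (θ : symmetricSubalgebra (Fin n) ℝ →ₐ[ℝ] ℝ)
    (h : ∀ lam : Fin n → ℕ, Antitone lam → ∀ P : MvPolynomial (Fin n) ℝ, IsHL n t lam P →
      ∀ hPmem : P ∈ symmetricSubalgebra (Fin n) ℝ, 0 ≤ θ ⟨P, hPmem⟩) :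
    ∃ α : Fin n → ℝ, (∀ i, 0 ≤ α i) ∧
      ∀ f : symmetricSubalgebra (Fin n) ℝ, θ f = eval α (f : MvPolynomial (Fin n) ℝ) := by
  obtain ⟨α, Q, hQ, hα⟩ := exists_complex_point θ
  have hN : ∀ lam : Fin n → ℕ, Antitone lam → 0 ≤ aeval α (hlPoly n t lam) := by
    intro lam hl
    have h1 := h lam hl _ ((isHL_iff ht0 ht1).2 rfl)
      (Subalgebra.smul_mem _ (hlPoly_mem n t lam) _)
    have h2 : (0 : ℂ) ≤ aeval α ((vlam n t lam)⁻¹ • hlPoly n t lam) := by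
      rw [← hα ⟨_, Subalgebra.smul_mem _ (hlPoly_mem n t lam) _⟩]
      exact Complex.zero_le_real.2 h1
    rw [map_smul, Complex.real_smul] at h2
    exact nonneg_of_real_mul (inv_pos.2 (vlam_pos ht0 ht1 n lam)) h2
  have hpos := nonneg_of_hlPoly_nonneg ht0 ht1 n α Q hQ hN
  have hre : (fun i => ((α i).re : ℂ)) = α := funext fun i =>
    (Complex.eq_re_of_ofReal_le (r := 0) (by simpa using hpos i)).symm
  refine ⟨fun i => (α i).re, fun i => (Complex.nonneg_iff.1 (hpos i)).1, fun f => ?_⟩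
  have h1 := hα f
  rw [← hre] at h1
  have h2 := aeval_algebraMap_apply ℂ (fun i => (α i).re) (f : MvPolynomial (Fin n) ℝ)
  rw [Complex.coe_algebraMap] at h2
  rw [← coe_aeval_eq_eval]
  exact Complex.ofReal_injective (h1.trans h2)

/-! ### Nonnegative evaluations -/

/-- Hall–Littlewood polynomials are nonnegative on the closed orthant: the set of points
with distinct positive coordinates is dense there. -/
lemma eval_hlPoly_nonneg {t : ℝ} (ht0 : 0 ≤ t) (ht1 : t ≤ 1) {n : ℕ} {lam : Fin n → ℕ}
    (hl : Antitone lam) {α : Fin n → ℝ} (hα : ∀ i, 0 ≤ α i) : 0 ≤ eval α (hlPoly n t lam) := by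
  let y : ℝ → Fin n → ℝ := fun ε i => α i + ε * (i + 1)
  have hc : Continuous fun ε => eval (y ε) (hlPoly n t lam) :=
    (continuous_eval (hlPoly n t lam)).comp (continuous_pi fun i => by fun_prop)
  have h0 : y 0 = α := by
    ext i
    simp [y]
  rw [← h0]
  refine ge_of_tendsto (x := nhdsWithin (0 : ℝ) (Set.Ioi 0))
    (hc.continuousAt.tendsto.mono_left nhdsWithin_le_nhds) ?_
  -- two coordinates `α i + ε (i + 1)` and `α j + ε (j + 1)` agree for at most one `ε`
  have hev : ∀ i j : Fin n, i ≠ j →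
      ∀ᶠ ε in nhdsWithin (0 : ℝ) (Set.Ioi 0), y ε i ≠ y ε j := by
    intro i j hij
    have hij' : ((i : ℕ) : ℝ) - (j : ℕ) ≠ 0 :=
      sub_ne_zero.2 fun h => hij (Fin.ext (Nat.cast_injective h))
    have h1 : ∀ᶠ ε in nhdsWithin (0 : ℝ) (Set.Ioi 0),
        ε ≠ (α j - α i) / (((i : ℕ) : ℝ) - (j : ℕ)) := by
      by_cases h : (α j - α i) / (((i : ℕ) : ℝ) - (j : ℕ)) = 0
      · rw [h]
        filter_upwards [self_mem_nhdsWithin] with ε hε using ne_of_gt hε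
      · exact nhdsWithin_le_nhds (isOpen_ne.mem_nhds (Ne.symm h))
    filter_upwards [h1] with ε hε heq
    apply hε
    rw [eq_div_iff hij']
    simp only [y] at heq
    linarith
  have hall : ∀ᶠ ε in nhdsWithin (0 : ℝ) (Set.Ioi 0), ∀ i j : Fin n, i ≠ j → y ε i ≠ y ε j := by
    simp only [Filter.eventually_all]
    exact hev
  filter_upwards [hall, self_mem_nhdsWithin] with ε hε hpos
  have hinj : Function.Injective (y ε) := fun i j h => by
    by_contra hne
    exact hε i j hne h
  rw [eval_hlPoly t lam hinj]
  refine hlR_nonneg ht0 ht1 n lam hl (y ε) ⟨hinj, fun i => ?_⟩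
  have : (0 : ℝ) < ε := hpos
  have := hα i
  simp only [y]
  positivity

end

/-- **finite Kerov corollary.** For `n ≥ 1` and `0 ≤ t < 1`, an ℝ-algebra
homomorphism `θ : Λ_n → ℝ` takes nonnegative values on all Hall–Littlewood polynomials
`P_λ(a_1,…,a_n;t)` (for partitions `λ` with at most `n` nonzero parts) if and only if it
is given by evaluation `f ↦ f(α_1,…,α_n)` at some nonnegative reals `α_1, …, α_n`. -/
theorem finite_kerov (n : ℕ) (hn : 1 ≤ n) (t : ℝ) (ht0 : 0 ≤ t) (ht1 : t < 1)
    (θ : MvPolynomial.symmetricSubalgebra (Fin n) ℝ →ₐ[ℝ] ℝ) :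
    (∀ (lam : Fin n → ℕ), Antitone lam →
      ∀ P : MvPolynomial (Fin n) ℝ, IsHL n t lam P →
      ∀ hPmem : P ∈ MvPolynomial.symmetricSubalgebra (Fin n) ℝ,
        0 ≤ θ ⟨P, hPmem⟩) ↔
    (∃ α : Fin n → ℝ, (∀ i, 0 ≤ α i) ∧
      ∀ f : MvPolynomial.symmetricSubalgebra (Fin n) ℝ,
        θ f = eval α (f : MvPolynomial (Fin n) ℝ)) := by
  constructor
  · exact exists_nonneg_point ht0 ht1 θ
  · rintro ⟨α, hα, hθ⟩ lam hl P hP hPmem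
    rw [hθ]
    change 0 ≤ eval α P
    rw [(isHL_iff ht0 ht1).1 hP, smul_eval]
    exact mul_nonneg (inv_pos.2 (vlam_pos ht0 ht1 n lam)).le
      (eval_hlPoly_nonneg ht0 ht1.le hl hα)
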